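/- arXiv:2105.14228 — 3 statements merged into one kernel-verified Lean document; each statement's English description precedes it below -/
import Mathlib

section
/- A set function f : 2^N → ℝ ∪ {-∞} with nonempty effective domain is M♮-concave if and only if it satisfies both (P1): for all X, Y with |X| < |Y|, f(X) + f(Y) ≤ max_{j ∈ Y\X} { f(X+j) + f(Y−j) }, and (P2): for all X, Y with |X| = |Y| and all i ∈ X \ Y, f(X) + f(Y) ≤ max_{j ∈ Y\X} { f(X−i+j) + f(Y+i−j) }. -/
/-- M♮-concavity of a set function with values in ℝ ∪ {-∞}. -/
def MnatConcave {α : Type*} [DecidableEq α] (f : Finset α → WithBot ℝ) : Prop :=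
  ∀ X Y : Finset α, ∀ i ∈ X \ Y,
    f X + f Y ≤
      max (f (X.erase i) + f (insert i Y))
        ((Y \ X).sup fun j => f (insert j (X.erase i)) + f ((insert i Y).erase j))

/-!
Each implication goes through the local exchange inequalities. Suppose a pair `(X, Y)` violates an
exchange inequality for `i ∈ X \ Y`. Move `Y` one step towards `X`: among the sets `Y + u - v` with
a fixed `u ∈ X \ Y` on which `f` is finite, take the one maximizing
`f (X - i + v) + f (Y + u - v)`. The local exchange inequalities for the pairs
`(Y, Y + u - v + i - k)` then show that `(X, Y + u - v)` violates the same inequality, so descent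
rules out violating pairs. The other cases are variants in which `i`, `u` or `v` is absent.
-/

section ScalarInequalities

variable {G : Type*} [AddCommMonoid G] [LinearOrder G] [IsOrderedCancelAddMonoid G]

theorem le_max_of_add_self_le_add {p s t : WithBot G} (h : p + p ≤ s + t) :
    p ≤ max s t := by
  by_contra! hlt
  obtain ⟨hs, ht⟩ := max_lt_iff.1 hlt
  exact h.not_gt ((add_le_add_right ht.le s).trans_lt (WithBot.add_lt_add_right hs.ne_bot hs))

/- The descent step. A violating pair `(X, Y)` has `x = f X`, `y = f Y`, `A v = f (X - i + v)`,
`B v = f (Y + i - v)`; the candidates for replacing `Y` are `Y + u - v`, with values `C v`, and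
`d` stands for `f (Y + u - v + i - k)`. The conclusion is that `(X, Y + u - v)` violates too. -/
theorem exists_forall_add_lt_add {ι : Type*} {T : Finset ι} {A B C : ι → WithBot G}
    {x y : WithBot G} (hC : ∃ v ∈ T, C v ≠ ⊥) (hlt : ∀ v ∈ T, A v + B v < x + y) :
    ∃ v ∈ T, C v ≠ ⊥ ∧
      ∀ k ∈ T, ∀ d, y + d ≤ max (B k + C v) (B v + C k) → A k + d < x + C v := by
  obtain ⟨v₀, hv₀, hCv₀⟩ := hC
  obtain ⟨v, hv, hmax⟩ := (T.filter (C · ≠ ⊥)).exists_max_image (fun v => A v + C v)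
    ⟨v₀, Finset.mem_filter.2 ⟨hv₀, hCv₀⟩⟩
  obtain ⟨hvT, hCv⟩ := Finset.mem_filter.1 hv
  refine ⟨v, hvT, hCv, fun k hk d hd => ?_⟩
  have hswap : A k + (B v + C k) ≤ A v + B v + C v := by
    by_cases hCk : C k = ⊥
    · simp [hCk]
    · calc A k + (B v + C k) = A k + C k + B v := by abel
        _ ≤ A v + C v + B v := add_le_add_left (hmax k (Finset.mem_filter.2 ⟨hk, hCk⟩)) _
        _ = A v + B v + C v := by abel
  have hsum : y + (A k + d) < y + (x + C v) := calc
    y + (A k + d) = A k + (y + d) := by abel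
    _ ≤ A k + max (B k + C v) (B v + C k) := by gcongr
    _ = max (A k + B k + C v) (A k + (B v + C k)) := by rw [← max_add_add_left, add_assoc]
    _ < x + y + C v := max_lt (WithBot.add_lt_add_right hCv (hlt k hk))
      (hswap.trans_lt (WithBot.add_lt_add_right hCv (hlt v hvT)))
    _ = y + (x + C v) := by abel
  exact lt_of_add_lt_add_left hsum

end ScalarInequalities

section FinsetLemmas

variable {α : Type*}

theorem mem_insertNone_iff_toFinset_subset {s : Finset α} {v : Option α} :
    v ∈ s.insertNone ↔ v.toFinset ⊆ s := by
  simp [Finset.subset_iff]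

variable [DecidableEq α] {Y : Finset α} {u v : α}

theorem card_insert_erase (hu : u ∉ Y) (hv : v ∈ Y) : (insert u (Y.erase v)).card = Y.card := by
  grind

theorem card_erase_insert (hu : u ∉ Y) (hv : v ∈ Y) : ((insert u Y).erase v).card = Y.card := by
  grind

end FinsetLemmas

section Exchange

variable {α G : Type*} [DecidableEq α] [AddCommMonoid G] [LinearOrder G]

/-- M♮-concavity for set functions with values in `G ∪ {-∞}`; for `G = ℝ` this unfolds to
`MnatConcave`. -/
def MnatExchange (f : Finset α → WithBot G) : Prop :=
  ∀ X Y : Finset α, ∀ i ∈ X \ Y,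
    f X + f Y ≤
      max (f (X.erase i) + f (insert i Y))
        ((Y \ X).sup fun j => f (insert j (X.erase i)) + f ((insert i Y).erase j))

/-- The exchange property (P1), for pairs of sets with `|X| < |Y|`. -/
def CardLTExchange (f : Finset α → WithBot G) : Prop :=
  ∀ X Y : Finset α, X.card < Y.card →
    f X + f Y ≤ (Y \ X).sup fun j => f (insert j X) + f (Y.erase j)

/-- The exchange property (P2), for pairs of sets with `|X| = |Y|`. -/
def CardEqExchange (f : Finset α → WithBot G) : Prop :=
  ∀ X Y : Finset α, X.card = Y.card → ∀ i ∈ X \ Y,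
    f X + f Y ≤ (Y \ X).sup fun j => f (insert j (X.erase i)) + f ((insert i Y).erase j)

/-- The local exchange inequalities: exchange between two sets each of which has at most two
elements outside the other. `S` is the intersection of the two sets, and the number in a field name
counts the elements of their symmetric difference. -/
structure LocalExchange (f : Finset α → WithBot G) : Prop where
  exchange_two {S : Finset α} {a b : α} (ha : a ∉ S) (hb : b ∉ S) (hab : a ≠ b) :
    f S + f (insert a (insert b S)) ≤ f (insert a S) + f (insert b S)
  exchange_three {S : Finset α} {a b c : α} (ha : a ∉ S) (hb : b ∉ S) (hc : c ∉ S)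
    (hab : a ≠ b) (hac : a ≠ c) (hbc : b ≠ c) :
    f (insert a S) + f (insert b (insert c S)) ≤
      max (f (insert a (insert b S)) + f (insert c S))
        (f (insert a (insert c S)) + f (insert b S))
  exchange_four {S : Finset α} {a b c d : α} (ha : a ∉ S) (hb : b ∉ S) (hc : c ∉ S) (hd : d ∉ S)
    (hab : a ≠ b) (hac : a ≠ c) (had : a ≠ d) (hbc : b ≠ c) (hbd : b ≠ d) (hcd : c ≠ d) :
    f (insert a (insert b S)) + f (insert c (insert d S)) ≤
      max (f (insert a (insert c S)) + f (insert b (insert d S)))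
        (f (insert a (insert d S)) + f (insert b (insert c S)))

variable {f : Finset α → WithBot G}

theorem CardLTExchange.localExchange (h₁ : CardLTExchange f) (h₂ : CardEqExchange f) :
    LocalExchange f where
  exchange_two {S a b} ha hb hab := by
    have h := h₁ S (insert a (insert b S)) (by grind)
    rw [show insert a (insert b S) \ S = {a, b} by grind, Finset.sup_insert,
      Finset.sup_singleton] at h
    simpa [Finset.erase_insert_of_ne, add_comm, *] using h
  exchange_three {S a b c} ha hb hc hab hac hbc := by
    have h := h₁ (insert a S) (insert b (insert c S)) (by grind)
    rw [show insert b (insert c S) \ insert a S = {b, c} by grind, Finset.sup_insert,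
      Finset.sup_singleton] at h
    simpa [Finset.erase_insert_of_ne, Finset.insert_comm, add_comm, *] using h
  exchange_four {S a b c d} ha hb hc hd hab hac had hbc hbd hcd := by
    have h := h₂ (insert a (insert b S)) (insert c (insert d S)) (by grind) b (by grind)
    rw [show insert c (insert d S) \ insert a (insert b S) = {c, d} by grind, Finset.sup_insert,
      Finset.sup_singleton] at h
    simpa [Finset.erase_insert_of_ne, Finset.insert_comm, *] using h

theorem CardLTExchange.exists_insert_ne_bot (h₁ : CardLTExchange f) {X Y : Finset α} {i : α}
    (hcard : Y.card < X.card) (hlt : f (X.erase i) + f (insert i Y) < f X + f Y) :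
    ∃ u ∈ X \ Y, u ≠ i ∧ f (insert u Y) ≠ ⊥ := by
  have hexch := h₁ Y X hcard
  rw [add_comm (f Y)] at hexch
  obtain ⟨u, hu, hle⟩ := (Finset.le_sup_iff hlt.bot_lt).1 hexch
  refine ⟨u, hu, ?_, (WithBot.add_ne_bot.1 (ne_bot_of_le_ne_bot hlt.ne_bot hle)).1⟩
  rintro rfl
  exact hle.not_gt (by rwa [add_comm])

theorem LocalExchange.exchange_erase_erase (hf : LocalExchange f) {Y : Finset α} {u v k : α}
    (hv : v ∈ Y) (hk : k ∈ Y) (hu : u ∉ Y) (hvk : v ≠ k) :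
    f Y + f ((insert u (Y.erase v)).erase k) ≤
      max (f (Y.erase k) + f (insert u (Y.erase v)))
        (f (Y.erase v) + f (insert u (Y.erase k))) := by
  have h := hf.exchange_three (S := (Y.erase v).erase k) (a := u) (b := k) (c := v)
    (by grind) (by grind) (by grind) (by grind) (by grind) hvk.symm
  rw [add_comm, add_comm (f (Y.erase k)), add_comm (f (Y.erase v))]
  convert h using 4 <;> grind

theorem LocalExchange.exchange_insert_insert_erase (hf : LocalExchange f) {Y : Finset α}
    {i u v : α} (hi : i ∉ Y) (hu : u ∉ Y) (hiu : i ≠ u) (hv : v ∈ Y) :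
    f Y + f (insert i ((insert u Y).erase v)) ≤
      max (f (insert i Y) + f ((insert u Y).erase v))
        (f ((insert i Y).erase v) + f (insert u Y)) := by
  have h := hf.exchange_three (S := Y.erase v) (a := v) (b := i) (c := u)
    (by grind) (by grind) (by grind) (by grind) (by grind) hiu
  rw [add_comm (f ((insert i Y).erase v))]
  convert h using 4 <;> grind

theorem LocalExchange.exchange_insert_insert_erase_erase (hf : LocalExchange f) {Y : Finset α}
    {i u v k : α} (hi : i ∉ Y) (hu : u ∉ Y) (hiu : i ≠ u) (hv : v ∈ Y) (hk : k ∈ Y)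
    (hvk : v ≠ k) :
    f Y + f ((insert i ((insert u Y).erase v)).erase k) ≤
      max (f ((insert i Y).erase k) + f ((insert u Y).erase v))
        (f ((insert i Y).erase v) + f ((insert u Y).erase k)) := by
  have h := hf.exchange_four (S := (Y.erase v).erase k) (a := v) (b := k) (c := i) (d := u)
    (by grind) (by grind) (by grind) (by grind) hvk (by grind) (by grind) (by grind)
    (by grind) hiu
  rw [add_comm (f ((insert i Y).erase v))]
  convert h using 4 <;> grind

theorem LocalExchange.exchange_option (hf : LocalExchange f) {Y : Finset α} {i u : α}
    {v k : Option α} (hi : i ∉ Y) (hu : u ∉ Y) (hiu : i ≠ u) (hv : v.toFinset ⊆ Y)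
    (hk : k.toFinset ⊆ Y) (hvk : Disjoint v.toFinset k.toFinset) :
    f Y + f (insert i (insert u Y \ v.toFinset) \ k.toFinset) ≤
      max (f (insert i Y \ k.toFinset) + f (insert u Y \ v.toFinset))
        (f (insert i Y \ v.toFinset) + f (insert u Y \ k.toFinset)) := by
  rcases v with _ | v <;> rcases k with _ | k <;>
    simp only [Option.toFinset_none, Option.toFinset_some, Finset.sdiff_empty,
      Finset.sdiff_singleton_eq_erase, Finset.singleton_subset_iff,
      Finset.disjoint_singleton] at hv hk hvk ⊢
  · exact (hf.exchange_two hi hu hiu).trans (le_max_left _ _)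
  · rw [Finset.erase_insert_of_ne (by grind), max_comm]
    exact hf.exchange_insert_insert_erase hi hu hiu hk
  · exact hf.exchange_insert_insert_erase hi hu hiu hv
  · exact hf.exchange_insert_insert_erase_erase hi hu hiu hv hk hvk

theorem exists_mem_sdiff_ne_of_sup_lt {X Y : Finset α} {i : α} (hcard : X.card = Y.card)
    (hi : i ∈ X \ Y)
    (h : ((Y \ X).sup fun j => f (insert j (X.erase i)) + f ((insert i Y).erase j)) <
      f X + f Y) :
    ∃ u ∈ X \ Y, u ≠ i := by
  by_contra! honly
  obtain ⟨j, hj⟩ : (Y \ X).Nonempty :=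
    Finset.card_pos.1 (Finset.card_sdiff_comm hcard ▸ Finset.card_pos.2 ⟨i, hi⟩)
  obtain ⟨hiX, -⟩ := Finset.mem_sdiff.1 hi
  obtain ⟨hjY, hjX⟩ := Finset.mem_sdiff.1 hj
  have hsub : X.erase i ⊆ Y := fun u hu => by_contra fun huY =>
    Finset.ne_of_mem_erase hu (honly u (Finset.mem_sdiff.2 ⟨Finset.mem_of_mem_erase hu, huY⟩))
  have hY : insert j (X.erase i) = Y := Finset.eq_of_subset_of_card_le
    (Finset.insert_subset hjY hsub) (by rw [card_insert_erase hjX hiX, hcard])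
  have hX : (insert i Y).erase j = X := by
    rw [← hY, Finset.insert_comm, Finset.insert_erase hiX, Finset.erase_insert hjX]
  have hlt := (Finset.le_sup (f := fun j => f (insert j (X.erase i)) + f ((insert i Y).erase j))
    hj).trans_lt h
  simp only [hX, hY, add_comm (f Y)] at hlt
  exact lt_irrefl _ hlt

/- `none` encodes the move of `i` without a partner, so that the descent can treat both kinds of
exchange at once. -/
theorem max_sup_eq_sup_insertNone (X Y : Finset α) (i : α) :
    max (f (X.erase i) + f (insert i Y))
        ((Y \ X).sup fun j => f (insert j (X.erase i)) + f ((insert i Y).erase j)) =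
      (Y \ X).insertNone.sup fun v =>
        f (X.erase i ∪ v.toFinset) + f (insert i Y \ v.toFinset) := by
  simp [Finset.insertNone, Finset.sup_map, Function.comp_def, Finset.sdiff_singleton_eq_erase,
    Finset.union_singleton]

theorem MnatExchange.exchange_two (hf : MnatExchange f) {S : Finset α} {a b : α}
    (hb : b ∉ S) (hab : a ≠ b) :
    f S + f (insert a (insert b S)) ≤ f (insert a S) + f (insert b S) := by
  have h := hf (insert a (insert b S)) S b (by grind)
  rw [show S \ insert a (insert b S) = ∅ by grind, Finset.sup_empty] at h
  simpa [Finset.erase_insert_of_ne, add_comm, *] using h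

theorem MnatExchange.exchange_three (hf : MnatExchange f) {S : Finset α} {a b c : α}
    (ha : a ∉ S) (hb : b ∉ S) (hab : a ≠ b) (hac : a ≠ c) (hbc : b ≠ c) :
    f (insert a S) + f (insert b (insert c S)) ≤
      max (f (insert a (insert b S)) + f (insert c S))
        (f (insert a (insert c S)) + f (insert b S)) := by
  have h := hf (insert b (insert c S)) (insert a S) b (by grind)
  rw [show insert a S \ insert b (insert c S) = {a} by grind, Finset.sup_singleton] at h
  rw [add_comm, add_comm (f (insert a (insert b S)))]
  convert h using 4 <;> grind

theorem MnatExchange.exchange_four_or_move (hf : MnatExchange f) {S : Finset α} {a b c d : α}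
    (ha : a ∉ S) (hc : c ∉ S) (hd : d ∉ S) (hab : a ≠ b) (hac : a ≠ c)
    (had : a ≠ d) (hbc : b ≠ c) (hbd : b ≠ d) (hcd : c ≠ d) :
    f (insert a (insert b S)) + f (insert c (insert d S)) ≤
      max (f (insert b S) + f (insert a (insert c (insert d S))))
        (max (f (insert a (insert c S)) + f (insert b (insert d S)))
          (f (insert a (insert d S)) + f (insert b (insert c S)))) := by
  have h := hf (insert a (insert b S)) (insert c (insert d S)) a (by grind)
  rw [show insert c (insert d S) \ insert a (insert b S) = {d, c} by grind, Finset.sup_insert,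
    Finset.sup_singleton] at h
  rw [add_comm (f (insert a (insert c S))), add_comm (f (insert a (insert d S)))]
  convert h using 5 <;> grind

end Exchange

section Main

variable {α G : Type*} [DecidableEq α] [AddCommMonoid G] [LinearOrder G]
  [IsOrderedCancelAddMonoid G] {f : Finset α → WithBot G}

theorem MnatExchange.exchange_four (hf : MnatExchange f) {S : Finset α} {a b c d : α}
    (ha : a ∉ S) (hb : b ∉ S) (hc : c ∉ S) (hd : d ∉ S) (hab : a ≠ b) (hac : a ≠ c)
    (had : a ≠ d) (hbc : b ≠ c) (hbd : b ≠ d) (hcd : c ≠ d) :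
    f (insert a (insert b S)) + f (insert c (insert d S)) ≤
      max (f (insert a (insert c S)) + f (insert b (insert d S)))
        (f (insert a (insert d S)) + f (insert b (insert c S))) := by
  by_contra! hlt
  have hmove_a := (le_max_iff.1
    (hf.exchange_four_or_move ha hc hd hab hac had hbc hbd hcd)).resolve_right hlt.not_ge
  have hmove_b := (le_max_iff.1
    (hf.exchange_four_or_move hb hc hd hab.symm hbc hbd hac had hcd)).resolve_right (by
      rw [Finset.insert_comm b a, max_comm, add_comm (f (insert b (insert d S))),
        add_comm (f (insert b (insert c S)))]
      exact hlt.not_ge)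
  rw [Finset.insert_comm b a] at hmove_b
  have hsub_a : f (insert a S) + f (insert a (insert c (insert d S))) ≤
      f (insert a (insert c S)) + f (insert a (insert d S)) := by
    have h := hf.exchange_two (S := insert a S) (a := c) (b := d) (by grind) hcd
    rwa [Finset.insert_comm d, Finset.insert_comm c a, Finset.insert_comm c a] at h
  have hsub_b : f (insert b S) + f (insert b (insert c (insert d S))) ≤
      f (insert b (insert c S)) + f (insert b (insert d S)) := by
    have h := hf.exchange_two (S := insert b S) (a := c) (b := d) (by grind) hcd
    rwa [Finset.insert_comm d, Finset.insert_comm c b, Finset.insert_comm c b] at h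
  refine hlt.not_ge (le_max_of_add_self_le_add ?_)
  calc _ ≤ (f (insert b S) + f (insert a (insert c (insert d S)))) +
        (f (insert a S) + f (insert b (insert c (insert d S)))) := add_le_add hmove_a hmove_b
    _ = (f (insert a S) + f (insert a (insert c (insert d S)))) +
        (f (insert b S) + f (insert b (insert c (insert d S)))) := by abel
    _ ≤ _ := add_le_add hsub_a hsub_b
    _ = _ := by abel

theorem MnatExchange.localExchange (hf : MnatExchange f) : LocalExchange f where
  exchange_two _ hb hab := hf.exchange_two hb hab
  exchange_three ha hb _ hab hac hbc := hf.exchange_three ha hb hab hac hbc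
  exchange_four := hf.exchange_four

theorem MnatExchange.cardLTExchange (hf : MnatExchange f) : CardLTExchange f := by
  intro X Y hcard
  induction hn : (Y \ X).card using Nat.strong_induction_on generalizing Y with
  | _ n ih =>
  subst hn
  by_contra! h
  have hXY : f X + f Y ≠ ⊥ := h.ne_bot
  have hlt (v) (hv : v ∈ Y \ X) : f (insert v X) + f (Y.erase v) < f X + f Y :=
    (Finset.le_sup hv).trans_lt h
  obtain ⟨j, hj⟩ := Finset.sdiff_nonempty_of_card_lt_card hcard
  obtain ⟨u, hu, hju⟩ : ∃ u ∈ X \ Y, f (insert u (Y.erase j)) ≠ ⊥ := by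
    have hexch := hf Y X j hj
    rw [add_comm (f Y), add_comm (f (Y.erase j)), le_max_iff] at hexch
    obtain ⟨u, hu, hle⟩ :=
      (Finset.le_sup_iff hXY.bot_lt).1 (hexch.resolve_left (hlt j hj).not_ge)
    exact ⟨u, hu, (WithBot.add_ne_bot.1 (ne_bot_of_le_ne_bot hXY hle)).1⟩
  obtain ⟨v, hv, hYv, hdesc⟩ := exists_forall_add_lt_add
    (C := fun v => f (insert u (Y.erase v))) ⟨j, hj, hju⟩ hlt
  obtain ⟨huX, huY⟩ := Finset.mem_sdiff.1 hu
  obtain ⟨hvY, -⟩ := Finset.mem_sdiff.1 hv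
  have hdiff : insert u (Y.erase v) \ X = (Y \ X).erase v := by
    rw [Finset.insert_sdiff_of_mem _ huX, Finset.erase_sdiff_comm]
  have hexch := ih _ (by rw [hdiff]; exact Finset.card_erase_lt_of_mem hv) (insert u (Y.erase v))
    (by rwa [card_insert_erase huY hvY]) rfl
  refine hexch.not_gt ((Finset.sup_lt_iff ?_).2 fun k hk => ?_)
  · exact (WithBot.add_ne_bot.2 ⟨(WithBot.add_ne_bot.1 hXY).1, hYv⟩).bot_lt
  · rw [hdiff, Finset.mem_erase] at hk
    exact hdesc k hk.2 _ (hf.localExchange.exchange_erase_erase hvY (Finset.mem_sdiff.1 hk.2).1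
      huY hk.1.symm)

theorem MnatExchange.exists_insert_erase_ne_bot (hf : MnatExchange f) {X Y : Finset α} {u : α}
    (hcard : X.card = Y.card) (hu : u ∈ X \ Y) (hXY : f X + f Y ≠ ⊥) :
    ∃ v ∈ Y \ X, f ((insert u Y).erase v) ≠ ⊥ := by
  rcases le_max_iff.1 (hf X Y u hu) with hmove | hswap
  · have hYu := (WithBot.add_ne_bot.1 (ne_bot_of_le_ne_bot hXY hmove)).2
    have hXYu := WithBot.add_ne_bot.2 ⟨(WithBot.add_ne_bot.1 hXY).1, hYu⟩
    obtain ⟨v, hv, hle⟩ := (Finset.le_sup_iff hXYu.bot_lt).1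
      (hf.cardLTExchange X (insert u Y) (by grind))
    exact ⟨v, by grind, (WithBot.add_ne_bot.1 (ne_bot_of_le_ne_bot hXYu hle)).2⟩
  · obtain ⟨v, hv, hle⟩ := (Finset.le_sup_iff hXY.bot_lt).1 hswap
    exact ⟨v, hv, (WithBot.add_ne_bot.1 (ne_bot_of_le_ne_bot hXY hle)).2⟩

theorem MnatExchange.cardEqExchange (hf : MnatExchange f) : CardEqExchange f := by
  intro X Y hcard i hi
  induction hn : (Y \ X).card using Nat.strong_induction_on generalizing Y with
  | _ n ih =>
  subst hn
  by_contra! h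
  have hXY : f X + f Y ≠ ⊥ := h.ne_bot
  obtain ⟨u, hu, hui⟩ := exists_mem_sdiff_ne_of_sup_lt hcard hi h
  obtain ⟨v, hv, hYv, hdesc⟩ := exists_forall_add_lt_add
    (C := fun v => f ((insert u Y).erase v)) (hf.exists_insert_erase_ne_bot hcard hu hXY)
    fun v hv => (Finset.le_sup hv).trans_lt h
  obtain ⟨hiX, hiY⟩ := Finset.mem_sdiff.1 hi
  obtain ⟨huX, huY⟩ := Finset.mem_sdiff.1 hu
  obtain ⟨hvY, -⟩ := Finset.mem_sdiff.1 hv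
  have hdiff : (insert u Y).erase v \ X = (Y \ X).erase v := by
    rw [Finset.erase_sdiff_comm, Finset.insert_sdiff_of_mem _ huX]
  have hexch := ih _ (by rw [hdiff]; exact Finset.card_erase_lt_of_mem hv)
    ((insert u Y).erase v) (by rwa [card_erase_insert huY hvY])
    (Finset.mem_sdiff.2 ⟨hiX, by simp [hui.symm, hiY]⟩) rfl
  refine hexch.not_gt ((Finset.sup_lt_iff ?_).2 fun k hk => ?_)
  · exact (WithBot.add_ne_bot.2 ⟨(WithBot.add_ne_bot.1 hXY).1, hYv⟩).bot_lt
  · rw [hdiff, Finset.mem_erase] at hk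
    exact hdesc k hk.2 _ (hf.localExchange.exchange_insert_insert_erase_erase hiY huY hui.symm
      hvY (Finset.mem_sdiff.1 hk.2).1 hk.1.symm)

theorem CardLTExchange.exchange_of_card_le (h₁ : CardLTExchange f) (h₂ : CardEqExchange f)
    {X Y : Finset α} (hcard : X.card ≤ Y.card) {i : α} (hi : i ∈ X \ Y) :
    f X + f Y ≤ (Y \ X).sup fun j => f (insert j (X.erase i)) + f ((insert i Y).erase j) := by
  induction hn : Y.card using Nat.strong_induction_on generalizing Y with
  | _ n ih =>
  subst hn
  rcases hcard.eq_or_lt with heq | hcard_lt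
  · exact h₂ X Y heq i hi
  by_contra! h
  have hXY : f X + f Y ≠ ⊥ := h.ne_bot
  obtain ⟨j, hj, hle⟩ := (Finset.le_sup_iff hXY.bot_lt).1 (h₁ X Y hcard_lt)
  obtain ⟨v, hv, hYv, hdesc⟩ := exists_forall_add_lt_add (C := fun v => f (Y.erase v))
    ⟨j, hj, (WithBot.add_ne_bot.1 (ne_bot_of_le_ne_bot hXY hle)).2⟩
    fun v hv => (Finset.le_sup hv).trans_lt h
  obtain ⟨hiX, hiY⟩ := Finset.mem_sdiff.1 hi
  obtain ⟨hvY, hvX⟩ := Finset.mem_sdiff.1 hv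
  have hexch := ih _ (Finset.card_erase_lt_of_mem hvY) (Y := Y.erase v)
    (by rw [Finset.card_erase_of_mem hvY]; exact Nat.le_sub_one_of_lt hcard_lt)
    (Finset.mem_sdiff.2 ⟨hiX, fun h => hiY (Finset.mem_of_mem_erase h)⟩) rfl
  refine hexch.not_gt ((Finset.sup_lt_iff ?_).2 fun k hk => ?_)
  · exact (WithBot.add_ne_bot.2 ⟨(WithBot.add_ne_bot.1 hXY).1, hYv⟩).bot_lt
  · rw [Finset.erase_sdiff_comm, Finset.mem_erase] at hk
    obtain ⟨hkv, hkYX⟩ := hk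
    obtain ⟨hkY, hkX⟩ := Finset.mem_sdiff.1 hkYX
    refine hdesc k hkYX _ ?_
    rw [Finset.erase_insert_of_ne (s := Y) (ne_of_mem_of_not_mem hiX hkX),
      Finset.erase_insert_of_ne (s := Y) (ne_of_mem_of_not_mem hiX hvX),
      max_comm, add_comm _ (f (Y.erase k)), add_comm _ (f (Y.erase v))]
    exact (h₁.localExchange h₂).exchange_erase_erase hvY hkY hiY hkv.symm

theorem CardLTExchange.exchange_of_card_ge (h₁ : CardLTExchange f) (h₂ : CardEqExchange f)
    {X Y : Finset α} (hcard : Y.card ≤ X.card) {i : α} (hi : i ∈ X \ Y) :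
    f X + f Y ≤ (Y \ X).insertNone.sup fun v =>
        f (X.erase i ∪ v.toFinset) + f (insert i Y \ v.toFinset) := by
  induction hn : (X \ Y).card using Nat.strong_induction_on generalizing Y with
  | _ n ih =>
  subst hn
  rcases hcard.eq_or_lt with heq | hcard_lt
  · rw [← max_sup_eq_sup_insertNone]
    exact le_max_of_le_right (h₂ X Y heq.symm i hi)
  by_contra! h
  have hXY : f X + f Y ≠ ⊥ := h.ne_bot
  have hlt (v) (hv : v ∈ (Y \ X).insertNone) :
      f (X.erase i ∪ v.toFinset) + f (insert i Y \ v.toFinset) < f X + f Y :=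
    (Finset.le_sup (f := fun v => f (X.erase i ∪ v.toFinset) + f (insert i Y \ v.toFinset))
      hv).trans_lt h
  obtain ⟨u, hu, hui, hYu⟩ := h₁.exists_insert_ne_bot hcard_lt
    (by simpa using hlt none Finset.none_mem_insertNone)
  obtain ⟨v, hv, hYv, hdesc⟩ := exists_forall_add_lt_add
    (C := fun v => f (insert u Y \ v.toFinset)) ⟨none, by simp, by simpa using hYu⟩ hlt
  rw [mem_insertNone_iff_toFinset_subset] at hv
  obtain ⟨-, hiY⟩ := Finset.mem_sdiff.1 hi
  obtain ⟨huX, huY⟩ := Finset.mem_sdiff.1 hu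
  have hdiff : X \ (insert u Y \ v.toFinset) = (X \ Y).erase u := by
    clear * - hv hu
    grind
  have hexch := ih _ (by rw [hdiff]; exact Finset.card_erase_lt_of_mem hu)
    (Y := insert u Y \ v.toFinset)
    ((Finset.card_le_card Finset.sdiff_subset).trans ((Finset.card_insert_le _ _).trans hcard_lt))
    (by rw [hdiff]; exact Finset.mem_erase.2 ⟨hui.symm, hi⟩) rfl
  refine hexch.not_gt ((Finset.sup_lt_iff ?_).2 fun k hk => ?_)
  · exact (WithBot.add_ne_bot.2 ⟨(WithBot.add_ne_bot.1 hXY).1, hYv⟩).bot_lt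
  · rw [mem_insertNone_iff_toFinset_subset, sdiff_right_comm, Finset.insert_sdiff_of_mem _ huX,
      Finset.subset_sdiff] at hk
    exact hdesc k (mem_insertNone_iff_toFinset_subset.2 hk.1) _
      ((h₁.localExchange h₂).exchange_option hiY huY hui.symm (hv.trans Finset.sdiff_subset)
        (hk.1.trans Finset.sdiff_subset) hk.2.symm)

end Main

theorem stmt_2_general {α G : Type*} [DecidableEq α] [AddCommMonoid G] [LinearOrder G]
    [IsOrderedCancelAddMonoid G] (f : Finset α → WithBot G) :
    MnatExchange f ↔ CardLTExchange f ∧ CardEqExchange f := by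
  refine ⟨fun hf => ⟨hf.cardLTExchange, hf.cardEqExchange⟩, fun ⟨h₁, h₂⟩ X Y i hi => ?_⟩
  rcases le_total X.card Y.card with hcard | hcard
  · exact le_max_of_le_right (h₁.exchange_of_card_le h₂ hcard hi)
  · exact (h₁.exchange_of_card_ge h₂ hcard hi).trans_eq (max_sup_eq_sup_insertNone X Y i).symm

theorem stmt_2 {α : Type*} [Fintype α] [DecidableEq α] (f : Finset α → WithBot ℝ)
    (hne : ∃ X, f X ≠ ⊥) :
    MnatConcave f ↔
      ((∀ X Y : Finset α, X.card < Y.card →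
          f X + f Y ≤ (Y \ X).sup fun j => f (insert j X) + f (Y.erase j)) ∧
       (∀ X Y : Finset α, X.card = Y.card → ∀ i ∈ X \ Y,
          f X + f Y ≤
            (Y \ X).sup fun j => f (insert j (X.erase i)) + f ((insert i Y).erase j))) :=
  stmt_2_general f
end

section
/- Let f : 2^N → ℝ ∪ {-∞} be a set function whose effective domain is the family of independent sets of a matroid (equivalently, an M♮-convex family containing ∅). Then f is M♮-concave if and only if it satisfies (L1): f(Z+i+j)+f(Z) ≤ f(Z+i)+f(Z+j) for all Z ⊆ N and distinct i, j ∉ Z, and (L2): f(Z+i+j)+f(Z+k) ≤ max( f(Z+i+k)+f(Z+j), f(Z+j+k)+f(Z+i) ) for all Z ⊆ N and distinct i, j, k ∉ Z. -/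
/-!
Adding dummy elements `β` to the ground set turns `f` into a function on the `n`-element subsets of
`α ⊕ β` that ignores the dummies. It is a valuated matroid exactly when it satisfies the exchange
inequality for pairs of sets differing in two elements, and this local inequality splits into (L1),
(L2) and a four-element inequality, according to the number of dummies involved. The four-element
inequality follows from (L2): adding a modular function makes `f (Z + x)` independent of `x`, and
then (L2) is an ultrametric inequality for `f (Z + x + y)`, which implies the four-point condition.

For valuated matroids, local exchange implies global exchange by induction on `#(B' \ B)`; adding a
modular function again reduces to the case where no exchange with `u` improves on `B`.
-/

open Finset

section Exchange

variable {α G : Type*} [DecidableEq α] [AddCommSemigroup G] [LinearOrder G]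
  {f : Finset α → WithBot G}

/-- M♮-concavity of a set function with values in an arbitrary ordered semigroup with `-∞` adjoined;
`MnatConcave` is the case `G = ℝ`. -/
def IsMnatConcave (f : Finset α → WithBot G) : Prop :=
  ∀ X Y : Finset α, ∀ i ∈ X \ Y,
    f X + f Y ≤
      max (f (X.erase i) + f (insert i Y))
        ((Y \ X).sup fun j => f (insert j (X.erase i)) + f ((insert i Y).erase j))

/-- Condition (L1): submodularity of `f` on pairs of sets that each add one element to a common
set. -/
def LocalSubmodular (f : Finset α → WithBot G) : Prop :=
  ∀ Z : Finset α, ∀ i j : α, i ∉ Z → j ∉ Z → i ≠ j →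
    f (insert i (insert j Z)) + f Z ≤ f (insert i Z) + f (insert j Z)

/-- Condition (L2): the exchange inequality among three elements outside a common set. -/
def LocalTripleExchange (f : Finset α → WithBot G) : Prop :=
  ∀ Z : Finset α, ∀ i j k : α, i ∉ Z → j ∉ Z → k ∉ Z → i ≠ j → i ≠ k → j ≠ k →
    f (insert i (insert j Z)) + f (insert k Z) ≤
      max (f (insert i (insert k Z)) + f (insert j Z))
        (f (insert j (insert k Z)) + f (insert i Z))

/-- The exchange inequality among four elements outside a common set, also known as the three-term
tropical Plücker relation. It is the local form of the exchange axiom of valuated matroids. -/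
def LocalQuadExchange (f : Finset α → WithBot G) : Prop :=
  ∀ Z : Finset α, ∀ i j k l : α, i ∉ Z → j ∉ Z → k ∉ Z → l ∉ Z →
    i ≠ j → i ≠ k → i ≠ l → j ≠ k → j ≠ l → k ≠ l →
    f (insert i (insert j Z)) + f (insert k (insert l Z)) ≤
      max (f (insert i (insert k Z)) + f (insert j (insert l Z)))
        (f (insert i (insert l Z)) + f (insert j (insert k Z)))

lemma IsMnatConcave.localSubmodular (hf : IsMnatConcave f) : LocalSubmodular f := by
  intro Z i j hi _ hij
  have h := hf (insert i (insert j Z)) Z i (by grind)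
  have herase : (insert i (insert j Z)).erase i = insert j Z := erase_insert (by grind)
  have hsdiff : Z \ insert i (insert j Z) = ∅ := by grind
  rwa [herase, hsdiff, sup_empty, max_bot_right, add_comm (f (insert j Z))] at h

lemma IsMnatConcave.localTripleExchange (hf : IsMnatConcave f) : LocalTripleExchange f := by
  intro Z i j k hi _ hk hij hik hjk
  have h := hf (insert i (insert j Z)) (insert k Z) i (by grind)
  have herase : (insert i (insert j Z)).erase i = insert j Z := erase_insert (by grind)
  have hsdiff : insert k Z \ insert i (insert j Z) = {k} := by grind
  have herase' : (insert i (insert k Z)).erase k = insert i Z := by grind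
  rwa [herase, hsdiff, sup_singleton, herase', insert_comm k j, add_comm (f (insert j Z))] at h

lemma LocalQuadExchange.add_le_max_erase_insert (hf : LocalQuadExchange f) {B : Finset α}
    {u u' v v' : α} (hu : u ∉ B) (hu' : u' ∉ B) (hv : v ∈ B) (hv' : v' ∈ B) (huu' : u ≠ u')
    (hvv' : v ≠ v') :
    f ((insert u ((insert u' B).erase v')).erase v) + f B ≤
      max (f ((insert u B).erase v') + f ((insert u' B).erase v))
        (f ((insert u B).erase v) + f ((insert u' B).erase v')) := by
  have h := hf ((B.erase v).erase v') u u' v v' (by grind) (by grind) (by grind) (by grind)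
    huu' (by grind) (by grind) (by grind) (by grind) hvv'
  convert h using 4 <;> grind

end Exchange

section ModularTilt

variable {α G : Type*}

/-- The sum of `f` and the modular function with weights `p`. Exchange inequalities compare sums
`f X + f Y` with fixed `X ∪ Y` and `X ∩ Y`, so they are invariant under tilting. -/
def tilt [AddCommMonoid G] (f : Finset α → WithBot G) (p : α → G) (X : Finset α) : WithBot G :=
  f X + (∑ x ∈ X, p x : G)

lemma tilt_ne_bot_iff [AddCommMonoid G] {f : Finset α → WithBot G} {p : α → G} {X : Finset α} :
    tilt f p X ≠ ⊥ ↔ f X ≠ ⊥ := by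
  rw [tilt, WithBot.add_ne_bot, and_iff_left WithBot.coe_ne_bot]

variable [DecidableEq α]

lemma tilt_add_tilt [AddCommMonoid G] (f : Finset α → WithBot G) (p : α → G) (X Y : Finset α) :
    tilt f p X + tilt f p Y = f X + f Y + (∑ x ∈ X ∪ Y, p x + ∑ x ∈ X ∩ Y, p x : G) := by
  rw [sum_union_inter, tilt, tilt, WithBot.coe_add, add_add_add_comm]

lemma exists_tilt_insert_eq_coe [AddCommGroup G] (f : Finset α → WithBot G) (Z : Finset α) :
    ∃ (p : α → G) (c : G), ∀ x ∉ Z, f (insert x Z) ≠ ⊥ → tilt f p (insert x Z) = c := by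
  let p : α → G := fun x => -(f (insert x Z)).unbotD 0
  refine ⟨p, ∑ z ∈ Z, p z, fun x hx hfx => ?_⟩
  lift f (insert x Z) to G using hfx with r hr
  have hpx : p x = -r := by simp [p, ← hr]
  rw [tilt, ← hr, sum_insert hx, hpx, ← WithBot.coe_add, add_neg_cancel_left]

variable [AddCommMonoid G] [LinearOrder G] [IsOrderedCancelAddMonoid G] {f : Finset α → WithBot G}

lemma tilt_add_tilt_le_max_iff {p : α → G} {X Y X₁ Y₁ X₂ Y₂ : Finset α}
    (hunion₁ : X₁ ∪ Y₁ = X ∪ Y) (hinter₁ : X₁ ∩ Y₁ = X ∩ Y)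
    (hunion₂ : X₂ ∪ Y₂ = X ∪ Y) (hinter₂ : X₂ ∩ Y₂ = X ∩ Y) :
    tilt f p X + tilt f p Y ≤ max (tilt f p X₁ + tilt f p Y₁) (tilt f p X₂ + tilt f p Y₂) ↔
      f X + f Y ≤ max (f X₁ + f Y₁) (f X₂ + f Y₂) := by
  simp only [tilt_add_tilt, hunion₁, hinter₁, hunion₂, hinter₂, max_add_add_right,
    WithBot.add_le_add_iff_right WithBot.coe_ne_bot]

lemma LocalTripleExchange.tilt_weights (hf : LocalTripleExchange f) (p : α → G) :
    LocalTripleExchange (tilt f p) := fun Z i j k hi hj hk hij hik hjk =>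
  (tilt_add_tilt_le_max_iff (by grind) (by grind) (by grind) (by grind)).2
    (hf Z i j k hi hj hk hij hik hjk)

lemma LocalQuadExchange.tilt_weights (hf : LocalQuadExchange f) (p : α → G) :
    LocalQuadExchange (tilt f p) := fun Z i j k l hi hj hk hl hij hik hil hjk hjl hkl =>
  (tilt_add_tilt_le_max_iff (by grind) (by grind) (by grind) (by grind)).2
    (hf Z i j k l hi hj hk hl hij hik hil hjk hjl hkl)

end ModularTilt

section FourPoint

lemma add_le_max_add_add_of_le_max {G : Type*} [LinearOrder G] [AddCommMonoid G]
    [IsOrderedAddMonoid G] {ab cd ac bd ad bc : G} (habc : ab ≤ max ac bc) (habd : ab ≤ max ad bd)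
    (hacd : cd ≤ max ac ad) (hbcd : cd ≤ max bc bd) :
    ab + cd ≤ max (ac + bd) (ad + bc) := by
  have h₁ : ab ≤ ac → cd ≤ bd → ab + cd ≤ ac + bd := add_le_add
  have h₂ : ab ≤ bd → cd ≤ ac → ab + cd ≤ ac + bd := fun h h' => add_comm bd ac ▸ add_le_add h h'
  have h₃ : ab ≤ ad → cd ≤ bc → ab + cd ≤ ad + bc := add_le_add
  have h₄ : ab ≤ bc → cd ≤ ad → ab + cd ≤ ad + bc := fun h h' => add_comm bc ad ▸ add_le_add h h'
  grind

lemma LocalTripleExchange.insert_insert_le_max {α G : Type*} [DecidableEq α] [AddCommMonoid G]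
    [LinearOrder G] [IsOrderedCancelAddMonoid G] {f : Finset α → WithBot G}
    (hf : LocalTripleExchange f) {Z : Finset α} {c : G} {i j k : α}
    (hi : i ∉ Z) (hj : j ∉ Z) (hk : k ∉ Z) (hij : i ≠ j) (hik : i ≠ k) (hjk : j ≠ k)
    (hfi : f (insert i Z) = c) (hfj : f (insert j Z) = c) (hfk : f (insert k Z) = c) :
    f (insert i (insert j Z)) ≤ max (f (insert i (insert k Z))) (f (insert j (insert k Z))) := by
  have h := hf Z i j k hi hj hk hij hik hjk
  rwa [hfi, hfj, hfk, max_add_add_right, WithBot.add_le_add_iff_right WithBot.coe_ne_bot] at h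

theorem LocalTripleExchange.localQuadExchange {α G : Type*} [DecidableEq α] [AddCommGroup G]
    [LinearOrder G] [IsOrderedAddMonoid G] {f : Finset α → WithBot G}
    (hf : LocalTripleExchange f) (hdown : ∀ X Y : Finset α, X ⊆ Y → f Y ≠ ⊥ → f X ≠ ⊥) :
    LocalQuadExchange f := by
  intro Z i j k l hi hj hk hl hij hik hil hjk hjl hkl
  by_cases hbot : f (insert i (insert j Z)) + f (insert k (insert l Z)) = ⊥
  · simp [hbot]
  obtain ⟨hijZ, hklZ⟩ := WithBot.add_ne_bot.1 hbot
  obtain ⟨p, c, hp⟩ := exists_tilt_insert_eq_coe f Z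
  have hpi := hp i hi (hdown _ _ (by grind) hijZ)
  have hpj := hp j hj (hdown _ _ (by grind) hijZ)
  have hpk := hp k hk (hdown _ _ (by grind) hklZ)
  have hpl := hp l hl (hdown _ _ (by grind) hklZ)
  have htilt := hf.tilt_weights p
  refine (tilt_add_tilt_le_max_iff (p := p) (by grind) (by grind) (by grind) (by grind)).1
    (add_le_max_add_add_of_le_max
      (htilt.insert_insert_le_max hi hj hk hij hik hjk hpi hpj hpk)
      (htilt.insert_insert_le_max hi hj hl hij hil hjl hpi hpj hpl) ?_ ?_)
  · simpa only [insert_comm] using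
      htilt.insert_insert_le_max hk hl hi hkl hik.symm hil.symm hpk hpl hpi
  · simpa only [insert_comm] using
      htilt.insert_insert_le_max hk hl hj hkl hjk.symm hjl.symm hpk hpl hpj

end FourPoint

section MatroidExchange

variable {α : Type*} {M : Matroid α}

lemma exists_indep_insert_sdiff_singleton {I J : Set α} (hI : M.Indep I) (hJ : M.Indep J) {u : α}
    (hu : u ∈ I \ J) (hJI : ¬ J ⊆ I) : ∃ v ∈ J \ I, M.Indep (insert u J \ {v}) := by
  by_cases hcl : u ∈ M.closure J
  · have hC := hJ.fundCircuit_isCircuit hcl hu.2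
    obtain ⟨v, hvC, hvI⟩ := Set.not_subset.1 fun hCI => hC.not_indep (hI.subset hCI)
    have hvu : v ≠ u := fun h => hvI (h ▸ hu.1)
    exact ⟨v, ⟨(M.fundCircuit_subset_insert u J hvC).resolve_left hvu, hvI⟩,
      (hJ.mem_fundCircuit_iff hcl hu.2).1 hvC⟩
  · obtain ⟨v, hv⟩ := Set.not_subset.1 hJI
    have huJ : M.Indep (insert u J) :=
      hJ.insert_indep_iff.2 (.inl ⟨hI.subset_ground hu.1, hcl⟩)
    exact ⟨v, hv, huJ.subset Set.sdiff_subset⟩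

variable [DecidableEq α]

lemma exists_indep_erase_insert {I J : Finset α} (hI : M.Indep I) (hJ : M.Indep J)
    (hcard : #I = #J) {u : α} (hu : u ∈ I \ J) :
    ∃ v ∈ J \ I, M.Indep ((insert u J).erase v : Finset α) := by
  have hJI : ¬ (J : Set α) ⊆ I := fun h =>
    (mem_sdiff.1 hu).2 (eq_of_subset_of_card_le (mod_cast h) hcard.le ▸ (mem_sdiff.1 hu).1)
  simpa using exists_indep_insert_sdiff_singleton hI hJ (by simpa using hu) hJI

lemma exists_matroid_indep_iff (I : Finset α → Prop) (h0 : I ∅)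
    (hdown : ∀ X Y : Finset α, X ⊆ Y → I Y → I X)
    (haug : ∀ X Y : Finset α, I X → I Y → #X < #Y → ∃ j ∈ Y \ X, I (insert j X)) :
    ∃ M : Matroid α, ∀ X : Finset α, I X ↔ M.Indep X :=
  ⟨(IndepMatroid.ofFinset Set.univ I h0 (fun X Y hY hXY => hdown X Y hXY hY)
    (fun X Y hX hY hXY => by simpa [and_assoc] using haug X Y hX hY hXY)
    (fun _ _ => Set.subset_univ _)).matroid, fun X => by simp⟩

end MatroidExchange

section ValuatedMatroid

lemma insert_erase_eq_of_sdiff_eq_singleton {α : Type*} [DecidableEq α] {B B' : Finset α} {u v : α}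
    (hu : B \ B' = {u}) (hv : B' \ B = {v}) : insert v (B.erase u) = B' := by
  ext x
  have hxu : x ∈ B ∧ x ∉ B' ↔ x = u := by rw [← mem_sdiff, hu, mem_singleton]
  have hxv : x ∈ B' ∧ x ∉ B ↔ x = v := by rw [← mem_sdiff, hv, mem_singleton]
  rw [mem_insert, mem_erase]
  tauto

theorem LocalQuadExchange.exists_le_erase_insert {α G : Type*} [DecidableEq α] [AddCommMonoid G]
    [LinearOrder G] [IsOrderedCancelAddMonoid G] {ω : Finset α → WithBot G} {M : Matroid α} {n : ℕ}
    (hloc : LocalQuadExchange ω) (hω : ∀ B : Finset α, ω B ≠ ⊥ ↔ M.Indep B ∧ #B = n)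
    {B B' : Finset α} {u : α} (hB : ω B ≠ ⊥) (hB' : ω B' ≠ ⊥) (hu : u ∈ B \ B')
    (hmax : ∀ v ∈ B' \ B, ω (insert v (B.erase u)) ≤ ω B) :
    ∃ v ∈ B' \ B, ω B' ≤ ω ((insert u B').erase v) := by
  have hcard : #B = #B' := ((hω B).1 hB).2.trans ((hω B').1 hB').2.symm
  by_cases hone : B \ B' = {u}
  · obtain ⟨v, hv⟩ := card_eq_one.1 (card_sdiff_comm hcard ▸ hone ▸ card_singleton u)
    have hvmem : v ∈ B' \ B := hv ▸ mem_singleton_self v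
    have hB'_eq : insert v (B.erase u) = B' := insert_erase_eq_of_sdiff_eq_singleton hone hv
    have hB_eq : (insert u B').erase v = B := by
      rw [erase_insert_of_ne (by grind), insert_erase_eq_of_sdiff_eq_singleton hv hone]
    exact ⟨v, hvmem, by simpa only [hB'_eq, hB_eq] using hmax v hvmem⟩
  -- Move `B'` closer to `B` by the best exchange that brings in some `u' ≠ u`.
  obtain ⟨u', hu', hne⟩ : ∃ u' ∈ B \ B', u' ≠ u := by grind
  obtain ⟨w, hw, hw_indep⟩ :=
    exists_indep_erase_insert ((hω B).1 hB).1 ((hω B').1 hB').1 hcard hu'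
  have hw_ne_bot : ω ((insert u' B').erase w) ≠ ⊥ := (hω _).2 ⟨hw_indep, by grind⟩
  obtain ⟨v', hv', hv'_max⟩ :=
    exists_max_image (B' \ B) (fun v => ω ((insert u' B').erase v)) ⟨w, hw⟩
  set B'' := (insert u' B').erase v'
  have hB'' : ω B'' ≠ ⊥ := ne_bot_of_le_ne_bot hw_ne_bot (hv'_max w hw)
  have hdiff : B'' \ B = (B' \ B).erase v' := by grind
  have hlt : #(B'' \ B) < #(B' \ B) := hdiff ▸ card_erase_lt_of_mem hv'
  obtain ⟨v, hv, hle⟩ := exists_le_erase_insert hloc hω hB hB'' (by grind)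
    fun v hv => hmax v (by grind)
  have hvB' : v ∈ B' \ B := by grind
  have hquad : ω B'' + ω B' ≤ max (ω ((insert u B').erase v') + ω ((insert u' B').erase v))
      (ω ((insert u B').erase v) + ω B'') :=
    (add_le_add_left hle _).trans (hloc.add_le_max_erase_insert (by grind) (by grind) (by grind)
      (by grind) hne.symm (by grind))
  rw [add_comm, le_max_iff] at hquad
  rcases hquad with h | h
  · exact ⟨v', hv', (WithBot.add_le_add_iff_right hB'').1
      (h.trans (add_le_add_right (hv'_max v hvB') _))⟩
  · exact ⟨v, hvB', (WithBot.add_le_add_iff_right hB'').1 h⟩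
termination_by #(B' \ B)

variable {G : Type*} [AddCommGroup G] [LinearOrder G] [IsOrderedAddMonoid G] [Nontrivial G]

lemma exists_add_coe_le_and_lt_add_coe {a b c d : WithBot G} (h : a + b < c + d) :
    ∃ p : G, a + p ≤ c ∧ b < d + p := by
  have hcd : c + d ≠ ⊥ := h.ne_bot
  lift c to G using (WithBot.add_ne_bot.1 hcd).1
  lift d to G using (WithBot.add_ne_bot.1 hcd).2
  induction a with
  | bot =>
    induction b with
    | bot => exact ⟨0, by simp⟩
    | coe b =>
      obtain ⟨p, hp⟩ := exists_gt (b - d)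
      exact ⟨p, by simp, mod_cast sub_lt_iff_lt_add'.1 hp⟩
  | coe a =>
    refine ⟨c - a, by norm_cast; simp, ?_⟩
    induction b with
    | bot => exact WithBot.bot_lt_coe _
    | coe b => norm_cast at h ⊢; grind

theorem LocalQuadExchange.exists_add_le_add {α : Type*} [DecidableEq α] {ω : Finset α → WithBot G}
    {M : Matroid α} {n : ℕ} (hloc : LocalQuadExchange ω)
    (hω : ∀ B : Finset α, ω B ≠ ⊥ ↔ M.Indep B ∧ #B = n) {B B' : Finset α} {u : α}
    (hB : ω B ≠ ⊥) (hB' : ω B' ≠ ⊥) (hu : u ∈ B \ B') :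
    ∃ v ∈ B' \ B, ω B + ω B' ≤ ω (insert v (B.erase u)) + ω ((insert u B').erase v) := by
  by_contra! hlt
  obtain ⟨p, hpu, hp⟩ : ∃ p : α → G, p u = 0 ∧ ∀ v ∈ B' \ B,
      ω (insert v (B.erase u)) + p v ≤ ω B ∧ ω ((insert u B').erase v) < ω B' + p v := by
    choose! p hp using fun v hv => exists_add_coe_le_and_lt_add_coe (hlt v hv)
    refine ⟨Function.update p u 0, Function.update_self .., fun v hv => ?_⟩
    rw [Function.update_of_ne (by grind)]
    exact hp v hv
  have sum_B (v : α) (hv : v ∈ B' \ B) :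
      ∑ x ∈ insert v (B.erase u), p x = p v + ∑ x ∈ B, p x := by
    rw [sum_insert (by grind), sum_erase _ hpu]
  have sum_B' (v : α) (hv : v ∈ B' \ B) :
      ∑ x ∈ B', p x = p v + ∑ x ∈ (insert u B').erase v, p x := by
    rw [add_sum_erase _ p (by grind), sum_insert (by grind), hpu, zero_add]
  obtain ⟨v, hv, hle⟩ := (hloc.tilt_weights p).exists_le_erase_insert
    (fun X => tilt_ne_bot_iff.trans (hω X)) (tilt_ne_bot_iff.2 hB) (tilt_ne_bot_iff.2 hB') hu
    fun v hv => by
      rw [tilt, tilt, sum_B v hv, WithBot.coe_add, ← add_assoc]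
      gcongr
      exact (hp v hv).1
  rw [tilt, tilt, sum_B' v hv, WithBot.coe_add, ← add_assoc,
    WithBot.add_le_add_iff_right WithBot.coe_ne_bot] at hle
  exact hle.not_gt (hp v hv).2

end ValuatedMatroid

section DummyLift

variable {α β G : Type*} {f : Finset α → WithBot G} {n : ℕ}

/-- The function on the `n`-element subsets of `α ⊕ β` that evaluates `f` on the elements of `α` and
ignores the dummy elements of `β`; it is `⊥` on subsets of any other size. -/
def dummyLift (f : Finset α → WithBot G) (n : ℕ) (B : Finset (α ⊕ β)) : WithBot G :=
  if #B = n then f B.toLeft else ⊥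

lemma dummyLift_le [Preorder G] (B : Finset (α ⊕ β)) : dummyLift f n B ≤ f B.toLeft := by
  rw [dummyLift]
  split_ifs <;> simp

lemma dummyLift_ne_bot_iff {M : Matroid α} (hM : ∀ X : Finset α, f X ≠ ⊥ ↔ M.Indep X)
    (B : Finset (α ⊕ β)) :
    dummyLift f n B ≠ ⊥ ↔
      (M.sum (Matroid.freeOn Set.univ)).Indep (B : Set (α ⊕ β)) ∧ #B = n := by
  have hpreimage : Sum.inl ⁻¹' (B : Set (α ⊕ β)) = B.toLeft := by ext; simp
  by_cases hB : #B = n <;> simp [dummyLift, hB, hM, hpreimage]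

theorem localQuadExchange_dummyLift [DecidableEq α] [DecidableEq β] [AddCommSemigroup G]
    [LinearOrder G] (hsub : LocalSubmodular f) (htri : LocalTripleExchange f)
    (hquad : LocalQuadExchange f) :
    LocalQuadExchange (dummyLift f n : Finset (α ⊕ β) → WithBot G) := by
  intro C a b c d ha hb hc hd hab hac had hbc hbd hcd
  have card_pair {x y : α ⊕ β} (hx : x ∉ C) (hy : y ∉ C) (hxy : x ≠ y) :
      #(insert x (insert y C)) = #C + 2 := by grind
  by_cases hn : #C + 2 = n
  swap
  · simp [dummyLift, *]
  simp only [dummyLift, *, not_false_eq_true, ne_eq, if_true]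
  rcases a with a | a <;> rcases b with b | b <;> rcases c with c | c <;> rcases d with d | d <;>
    simp only [toLeft_insert_inl, toLeft_insert_inr] <;>
    simp only [ne_eq, Sum.inl.injEq, ← mem_toLeft] at *
  case inl.inl.inl.inl => exact hquad _ a b c d ha hb hc hd hab hac had hbc hbd hcd
  case inl.inl.inl.inr =>
    simpa only [insert_comm, add_comm, max_comm] using htri _ a b c ha hb hc hab hac hbc
  case inl.inl.inr.inl =>
    simpa only [insert_comm, add_comm, max_comm] using htri _ a b d ha hb hd hab had hbd
  case inl.inr.inl.inl =>
    simpa only [insert_comm, add_comm, max_comm] using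
      htri _ c d a hc hd ha hcd (Ne.symm hac) (Ne.symm had)
  case inr.inl.inl.inl =>
    simpa only [insert_comm, add_comm, max_comm] using
      htri _ c d b hc hd hb hcd (Ne.symm hbc) (Ne.symm hbd)
  case inl.inl.inr.inr => exact le_max_of_le_left (hsub _ a b ha hb hab)
  case inr.inr.inl.inl =>
    exact le_max_of_le_left (by simpa only [add_comm] using hsub _ c d hc hd hcd)
  -- In the remaining cases the left-hand side coincides with one side of the maximum.
  all_goals simp [add_comm]

end DummyLift

section MnatConcave

variable {α G : Type*} [DecidableEq α] [AddCommGroup G] [LinearOrder G] [IsOrderedAddMonoid G]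
  [Nontrivial G] {f : Finset α → WithBot G}

theorem isMnatConcave_of_local {M : Matroid α} (hM : ∀ X : Finset α, f X ≠ ⊥ ↔ M.Indep X)
    (hsub : LocalSubmodular f) (htri : LocalTripleExchange f) : IsMnatConcave f := by
  intro X Y i hi
  by_cases hbot : f X + f Y = ⊥
  · simp [hbot]
  obtain ⟨hX, hY⟩ := WithBot.add_ne_bot.1 hbot
  have hquad : LocalQuadExchange f :=
    htri.localQuadExchange fun X Y hXY hY => (hM X).2 (((hM Y).1 hY).subset (mod_cast hXY))
  -- Padding `X` with a copy of `Y`, and `Y` with a copy of `X`, makes the cardinalities equal.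
  have hX_lift : dummyLift f (#X + #Y) (X.disjSum Y) = f X := by simp [dummyLift]
  have hY_lift : dummyLift f (#X + #Y) (Y.disjSum X) = f Y := by simp [dummyLift, add_comm]
  obtain ⟨v, hv, hle⟩ := (localQuadExchange_dummyLift hsub htri hquad).exists_add_le_add
    (dummyLift_ne_bot_iff hM) (hX_lift ▸ hX) (hY_lift ▸ hY) (u := .inl i) (by simpa using hi)
  rw [hX_lift, hY_lift] at hle
  replace hle := hle.trans (add_le_add (dummyLift_le _) (dummyLift_le _))
  rcases v with j | j
  · refine le_max_of_le_right (le_trans ?_ (le_sup (b := j) (by simpa using hv)))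
    convert hle using 3 <;> ext <;> simp
  · refine le_max_of_le_left ?_
    convert hle using 3 <;> ext <;> simp

theorem stmt_6_general (f : Finset α → WithBot G) (h0 : f ∅ ≠ ⊥)
    (hdown : ∀ X Y : Finset α, X ⊆ Y → f Y ≠ ⊥ → f X ≠ ⊥)
    (haug : ∀ X Y : Finset α, f X ≠ ⊥ → f Y ≠ ⊥ → #X < #Y → ∃ j ∈ Y \ X, f (insert j X) ≠ ⊥) :
    IsMnatConcave f ↔ LocalSubmodular f ∧ LocalTripleExchange f := by
  obtain ⟨M, hM⟩ := exists_matroid_indep_iff (fun X => f X ≠ ⊥) h0 hdown haug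
  exact ⟨fun hf => ⟨hf.localSubmodular, hf.localTripleExchange⟩,
    fun ⟨hsub, htri⟩ => isMnatConcave_of_local hM hsub htri⟩

end MnatConcave

theorem stmt_6 {α : Type*} [Fintype α] [DecidableEq α] (f : Finset α → WithBot ℝ)
    (h0 : f ∅ ≠ ⊥)
    (hdown : ∀ X Y : Finset α, X ⊆ Y → f Y ≠ ⊥ → f X ≠ ⊥)
    (haug : ∀ X Y : Finset α, f X ≠ ⊥ → f Y ≠ ⊥ → X.card < Y.card →
      ∃ j ∈ Y \ X, f (insert j X) ≠ ⊥) :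
    MnatConcave f ↔
      ((∀ Z : Finset α, ∀ i j : α, i ∉ Z → j ∉ Z → i ≠ j →
          f (insert i (insert j Z)) + f Z ≤ f (insert i Z) + f (insert j Z)) ∧
       (∀ Z : Finset α, ∀ i j k : α, i ∉ Z → j ∉ Z → k ∉ Z →
          i ≠ j → i ≠ k → j ≠ k →
          f (insert i (insert j Z)) + f (insert k Z) ≤
            max (f (insert i (insert k Z)) + f (insert j Z))
              (f (insert j (insert k Z)) + f (insert i Z)))) :=
  stmt_6_general f h0 hdown haug
end

section
/- For a set family B ⊆ 2^N, the weak simultaneous exchange property — for any distinct X, Y ∈ B there exist i ∈ X\Y and j ∈ Y\X with (X\{i})∪{j} ∈ B and (Y∪{i})\{j} ∈ B — is equivalent to the basis exchange axiom: for any X, Y ∈ B and every i ∈ X\Y there exists j ∈ Y\X with (X\{i})∪{j} ∈ B and (Y∪{i})\{j} ∈ B. -/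
/-- The matroid basis exchange axiom. -/
def BasisExchange {α : Type*} [DecidableEq α] (B : Set (Finset α)) : Prop :=
  ∀ X ∈ B, ∀ Y ∈ B, ∀ i ∈ X \ Y,
    ∃ j ∈ Y \ X, insert j (X.erase i) ∈ B ∧ (insert i Y).erase j ∈ B

/-!
Suppose the weak exchange property holds, and fix `X, Y ∈ B` and `i ∈ X \ Y`. If weak exchange
removes some `a ≠ i` from `X`, it also produces a member `Y'` of `B`, obtained from `Y` by adding
`a` and deleting an element outside `X`. Then `X \ Y'` is smaller than `X \ Y` and still contains
`i`, while `Y' \ X ⊆ Y \ X`, so induction gives the one-sided exchange property: `B` is the family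
of bases of a matroid. In a matroid, the fundamental circuit of `i` over the base `Y` and the
fundamental cocircuit of `i` for the base `X` share the element `i`, hence a second element `j`;
exchanging `i` and `j` keeps both sets bases.
-/

section Matroid

variable {α : Type*} {M : Matroid α} {X Y : Set α} {e f : α}

theorem isBase_insert_sdiff_of_mem_fundCircuit (hX : M.IsBase X) (he : e ∉ X)
    (hf : f ∈ M.fundCircuit e X) : M.IsBase (insert e X \ {f}) := by
  obtain rfl | hfX := M.fundCircuit_subset_insert e X hf
  · simpa [he] using hX
  · have heE : e ∈ M.E := by
      by_contra heE
      rw [M.fundCircuit_eq_of_notMem_ground heE, Set.mem_singleton_iff] at hf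
      exact he (hf ▸ hfX)
    have hind : M.Indep (insert e X \ {f}) :=
      (hX.indep.mem_fundCircuit_iff (by rwa [hX.closure_eq]) he).1 hf
    exact hX.exchange_isBase_of_indep' hfX he hind

theorem exists_symmetric_exchange_of_isBase (hX : M.IsBase X) (hY : M.IsBase Y)
    (he : e ∈ X \ Y) :
    ∃ f ∈ Y \ X, M.IsBase (insert f X \ {e}) ∧ M.IsBase (insert e Y \ {f}) := by
  have hC : M.IsCircuit (M.fundCircuit e Y) :=
    hY.fundCircuit_isCircuit (hX.subset_ground he.1) he.2
  have hK : M.IsCocircuit (M.fundCocircuit e X) := M.fundCocircuit_isCocircuit he.1 hX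
  obtain ⟨f, ⟨hfC, hfK⟩, hfe⟩ := (hC.isCocircuit_inter_nontrivial hK
    ⟨e, M.mem_fundCircuit e Y, M.mem_fundCocircuit e X⟩).exists_ne e
  have hfY : f ∈ Y := (M.fundCircuit_subset_insert e Y hfC).resolve_left hfe
  have hfX : f ∉ X := ((M.fundCocircuit_subset_insert_compl e X hfK).resolve_left hfe).2
  exact ⟨f, ⟨hfY, hfX⟩,
    isBase_insert_sdiff_of_mem_fundCircuit hX hfX (hX.mem_fundCocircuit_iff_mem_fundCircuit.1 hfK),
    isBase_insert_sdiff_of_mem_fundCircuit hY he.2 hfC⟩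

end Matroid

section SetFamily

variable {α : Type*} [DecidableEq α] {B : Set (Finset α)}

/-- The weak simultaneous exchange property: two distinct members of `B` admit some exchange that
keeps both in `B`, where the element leaving `X` cannot be prescribed. -/
def WeakExchange (B : Set (Finset α)) : Prop :=
  ∀ X ∈ B, ∀ Y ∈ B, X ≠ Y →
    ∃ i ∈ X \ Y, ∃ j ∈ Y \ X, insert j (X.erase i) ∈ B ∧ (insert i Y).erase j ∈ B

/-- The one-sided basis exchange property, which constrains only the modification of `X`. This is
the finset form of `Matroid.ExchangeProperty`. -/
def OneSidedExchange (B : Set (Finset α)) : Prop :=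
  ∀ X ∈ B, ∀ Y ∈ B, ∀ i ∈ X \ Y, ∃ j ∈ Y \ X, insert j (X.erase i) ∈ B

theorem WeakExchange.oneSidedExchange (h : WeakExchange B) : OneSidedExchange B := by
  intro X hX Y hY i hi
  induction hn : (X \ Y).card using Nat.strong_induction_on generalizing Y with
  | _ n ih =>
    subst hn
    obtain ⟨a, ha, b, hb, hXB, hYB⟩ := h X hX Y hY (by rintro rfl; simp at hi)
    obtain rfl | hia := eq_or_ne i a
    · exact ⟨b, hb, hXB⟩
    · have hcard : (X \ (insert a Y).erase b).card < (X \ Y).card :=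
        Finset.card_lt_card ((Finset.ssubset_iff_of_subset (by grind)).2 ⟨a, ha, by grind⟩)
      obtain ⟨j, hj, hjB⟩ := ih _ hcard _ hYB (by grind) rfl
      exact ⟨j, by grind, hjB⟩

theorem OneSidedExchange.exists_matroid_isBase_iff (h : OneSidedExchange B) (hB : B.Nonempty) :
    ∃ M : Matroid α, ∀ X : Finset α, M.IsBase X ↔ X ∈ B := by
  have exch : Matroid.ExchangeProperty fun S : Set α ↦ ∃ X ∈ B, (X : Set α) = S := by
    rintro _ _ ⟨X, hX, rfl⟩ ⟨Y, hY, rfl⟩ i hi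
    obtain ⟨j, hj, hjB⟩ := h X hX Y hY i (by simpa using hi)
    exact ⟨j, by simpa using hj, _, hjB, by simp⟩
  obtain ⟨X, hX⟩ := hB
  exact ⟨Matroid.ofExistsFiniteIsBase Set.univ _ ⟨X, ⟨X, hX, rfl⟩, X.finite_toSet⟩ exch
    fun _ _ ↦ Set.subset_univ _, by simp⟩

theorem basisExchange_of_isBase_iff {M : Matroid α} (hM : ∀ X : Finset α, M.IsBase X ↔ X ∈ B) :
    BasisExchange B := by
  intro X hX Y hY i hi
  obtain ⟨j, hj, hXB, hYB⟩ := exists_symmetric_exchange_of_isBase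
    ((hM X).2 hX) ((hM Y).2 hY) (e := i) (by simpa using hi)
  have hji : j ≠ i := by rintro rfl; simp_all
  refine ⟨j, by simpa using hj, (hM _).1 ?_, (hM _).1 (by simpa using hYB)⟩
  rwa [← Finset.erase_insert_of_ne hji, Finset.coe_erase, Finset.coe_insert]

theorem BasisExchange.sdiff_nonempty (h : BasisExchange B) {X Y : Finset α} (hX : X ∈ B)
    (hY : Y ∈ B) (hXY : X ≠ Y) : (X \ Y).Nonempty := by
  rw [Finset.sdiff_nonempty]
  intro hsub
  obtain ⟨k, hk⟩ := Finset.sdiff_nonempty.2 fun hsup ↦ hXY (hsub.antisymm hsup)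
  obtain ⟨j, hj, -⟩ := h Y hY X hX k hk
  exact (Finset.mem_sdiff.1 hj).2 (hsub (Finset.mem_sdiff.1 hj).1)

theorem BasisExchange.weakExchange (h : BasisExchange B) : WeakExchange B := by
  intro X hX Y hY hXY
  obtain ⟨i, hi⟩ := h.sdiff_nonempty hX hY hXY
  exact ⟨i, hi, h X hX Y hY i hi⟩

end SetFamily

theorem stmt_17_general {α : Type*} [DecidableEq α] (B : Set (Finset α)) :
    WeakExchange B ↔ BasisExchange B := by
  refine ⟨fun h X hX ↦ ?_, BasisExchange.weakExchange⟩
  obtain ⟨M, hM⟩ := h.oneSidedExchange.exists_matroid_isBase_iff ⟨X, hX⟩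
  exact basisExchange_of_isBase_iff hM X hX

theorem stmt_17 {α : Type*} [Fintype α] [DecidableEq α] (B : Set (Finset α))
    (hne : B.Nonempty) :
    (∀ X ∈ B, ∀ Y ∈ B, X ≠ Y →
        ∃ i ∈ X \ Y, ∃ j ∈ Y \ X, insert j (X.erase i) ∈ B ∧ (insert i Y).erase j ∈ B)
      ↔ BasisExchange B :=
  stmt_17_general B
end
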